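/- Let M be a linear tree-to-word transducer containing a rule q, f → u₀ q₁(x_{σ(1)}) … q_n(x_{σ(n)}) u_n in which, for some index i, u_i = ε and the languages L_{q_i} and L_{q_{i+1}} are both periodic of the same period w. Let M' be obtained from M by replacing this rule by the rule in which the adjacent occurrences q_i(x_{σ(i)}) and q_{i+1}(x_{σ(i+1)}) are swapped, i.e., q, f → u₀ … u_{i-1} q_{i+1}(x_{σ(i+1)}) q_i(x_{σ(i)}) u_{i+1} … u_n. Then M and M' are equivalent. -/

import Mathlib

namespace LTWpaper

/-- Trees over a ranked alphabet: a symbol of arity `n` with `n` children. -/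
inductive RTree (F : Type) (ar : F → ℕ) : Type
  | node (f : F) (ts : Fin (ar f) → RTree F ar) : RTree F ar

/-- A rule right-hand side `u₀ q₁(x_{σ(1)}) u₁ … q_n(x_{σ(n)}) u_n`:
`word i` is `u_i` (for `i : Fin (n+1)`), `st i` is `q_{i+1}` (for `i : Fin n`),
and position `i` reads the subtree `x_{perm i}`. -/
structure LTWRule (Δ Q : Type) (n : ℕ) where
  word : Fin (n + 1) → List Δ
  st : Fin n → Q
  perm : Equiv.Perm (Fin n)

/-- A (deterministic) linear tree-to-word transducer with axiom `pre init(x) post`. -/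
structure LTW (F : Type) (ar : F → ℕ) (Δ Q : Type) where
  pre : List Δ
  init : Q
  post : List Δ
  rules : Q → (f : F) → Option (LTWRule Δ Q (ar f))

/-- `u 0 ++ ws 0 ++ u 1 ++ ws 1 ++ ⋯ ++ ws (n-1) ++ u n`. -/
def interleave {Δ : Type} (n : ℕ) (u : Fin (n + 1) → List Δ) (ws : Fin n → List Δ) :
    List Δ :=
  u 0 ++ (List.finRange n).foldr (fun i acc => ws i ++ u i.succ ++ acc) []

/-- The partial function `⟦M⟧_q` computed by state `q`. -/
def LTW.semState {F Δ Q : Type} {ar : F → ℕ} (M : LTW F ar Δ Q) :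
    RTree F ar → Q → Option (List Δ)
  | .node f ts, q =>
    match M.rules q f with
    | none => none
    | some r =>
      if h : ∀ i : Fin (ar f), (M.semState (ts (r.perm i)) (r.st i)).isSome then
        some (interleave (ar f) r.word fun i => (M.semState (ts (r.perm i)) (r.st i)).get (h i))
      else none

/-- The partial function `⟦M⟧` computed by the transducer. -/
def LTW.sem {F Δ Q : Type} {ar : F → ℕ} (M : LTW F ar Δ Q) (t : RTree F ar) :
    Option (List Δ) :=
  (M.semState t M.init).map fun w => M.pre ++ w ++ M.post

/-- The output language `L_q` of a state. -/
def LTW.lang {F Δ Q : Type} {ar : F → ℕ} (M : LTW F ar Δ Q) (q : Q) : Set (List Δ) :=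
  {w | ∃ t, M.semState t q = some w}

/-- Standing assumption: every state has nonempty domain. -/
def LTW.NonemptyDoms {F Δ Q : Type} {ar : F → ℕ} (M : LTW F ar Δ Q) : Prop :=
  ∀ q : Q, ∃ t w, M.semState t q = some w

/-- `w^n`, the `n`-fold concatenation of the word `w`. -/
def listPow {Δ : Type} (w : List Δ) : ℕ → List Δ
  | 0 => []
  | n + 1 => w ++ listPow w n

/-- `lcp L = ε`: the only common prefix of all words of `L` is the empty word. -/
def LcpEps {Δ : Type} (L : Set (List Δ)) : Prop :=
  ∀ w : List Δ, (∀ v ∈ L, w <+: v) → w = []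

/-- `lcs L = ε`: the only common suffix of all words of `L` is the empty word. -/
def LcsEps {Δ : Type} (L : Set (List Δ)) : Prop :=
  ∀ w : List Δ, (∀ v ∈ L, w <:+ v) → w = []

/-- A language is earliest if `lcp L = lcs L = ε`. -/
def EarliestLang {Δ : Type} (L : Set (List Δ)) : Prop := LcpEps L ∧ LcsEps L

/-- `L ⊆ w*`. -/
def SubPow {Δ : Type} (w : List Δ) (L : Set (List Δ)) : Prop :=
  ∀ v ∈ L, ∃ n : ℕ, v = listPow w n

/-- `L` is periodic of period `w`: `w` is a smallest word with `L ⊆ w*`. -/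
def PeriodicOf {Δ : Type} (L : Set (List Δ)) (w : List Δ) : Prop :=
  SubPow w L ∧ ∀ w' : List Δ, SubPow w' L → w.length ≤ w'.length

/-- `L` is periodic. -/
def Periodic {Δ : Type} (L : Set (List Δ)) : Prop := ∃ w, PeriodicOf L w

/-- `L` is quasi-periodic on the left of handle `u` and period `w`:
`w` is a smallest word with `L ⊆ u w*`. -/
def QPLeftOf {Δ : Type} (L : Set (List Δ)) (u w : List Δ) : Prop :=
  (∀ v ∈ L, ∃ n : ℕ, v = u ++ listPow w n) ∧
  ∀ w' : List Δ, (∀ v ∈ L, ∃ n : ℕ, v = u ++ listPow w' n) → w.length ≤ w'.length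

/-- `L` is quasi-periodic on the right of handle `u` and period `w`:
`w` is a smallest word with `L ⊆ w* u`. -/
def QPRightOf {Δ : Type} (L : Set (List Δ)) (u w : List Δ) : Prop :=
  (∀ v ∈ L, ∃ n : ℕ, v = listPow w n ++ u) ∧
  ∀ w' : List Δ, (∀ v ∈ L, ∃ n : ℕ, v = listPow w' n ++ u) → w.length ≤ w'.length

/-- `L` is quasi-periodic (on the left or on the right). -/
def QuasiPeriodic {Δ : Type} (L : Set (List Δ)) : Prop :=
  (∃ u w, QPLeftOf L u w) ∨ (∃ u w, QPRightOf L u w)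

/-- The language `L u = { v u : v ∈ L }`. -/
def appendLang {Δ : Type} (L : Set (List Δ)) (u : List Δ) : Set (List Δ) :=
  {v | ∃ x ∈ L, v = x ++ u}

/-- The language `L₁ u L₂ = { a u b : a ∈ L₁, b ∈ L₂ }`. -/
def pairLang {Δ : Type} (L₁ : Set (List Δ)) (u : List Δ) (L₂ : Set (List Δ)) :
    Set (List Δ) :=
  {v | ∃ a ∈ L₁, ∃ b ∈ L₂, v = a ++ u ++ b}

/-- An LTW is earliest: every state `q` satisfies `lcp L_q = lcs L_q = ε`, and in every rule
every part `qᵢ(x) uᵢ` satisfies `lcp (L_{qᵢ} uᵢ) = ε`. -/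
def LTW.Earliest {F Δ Q : Type} {ar : F → ℕ} (M : LTW F ar Δ Q) : Prop :=
  (∀ q : Q, EarliestLang (M.lang q)) ∧
  ∀ (q : Q) (f : F) (r : LTWRule Δ Q (ar f)), M.rules q f = some r →
    ∀ i : Fin (ar f), LcpEps (appendLang (M.lang (r.st i)) (r.word i.succ))

/-- An erasing state: `L_q = {ε}`. -/
def LTW.Erasing {F Δ Q : Type} {ar : F → ℕ} (M : LTW F ar Δ Q) (q : Q) : Prop :=
  M.lang q = {([] : List Δ)}

/-- Erase-ordered: in every rule, if `qᵢ` is erasing then every later `q_j` is erasing,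
`σ(i) ≤ σ(j)` and `u_j = ε`. -/
def LTW.EraseOrdered {F Δ Q : Type} {ar : F → ℕ} (M : LTW F ar Δ Q) : Prop :=
  ∀ (q : Q) (f : F) (r : LTWRule Δ Q (ar f)), M.rules q f = some r →
    ∀ i j : Fin (ar f), M.Erasing (r.st i) → i ≤ j →
      M.Erasing (r.st j) ∧ r.perm i ≤ r.perm j ∧ r.word j.succ = []

/-- Co-reachable pairs of states of two transducers over the same input alphabet. -/
inductive CoReach {F Δ Q₁ Q₂ : Type} {ar : F → ℕ}
    (M₁ : LTW F ar Δ Q₁) (M₂ : LTW F ar Δ Q₂) : Q₁ → Q₂ → Prop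
  | base : CoReach M₁ M₂ M₁.init M₂.init
  | step {q₁ : Q₁} {q₂ : Q₂} {f : F} {r₁ : LTWRule Δ Q₁ (ar f)} {r₂ : LTWRule Δ Q₂ (ar f)}
      {i j : Fin (ar f)} :
      CoReach M₁ M₂ q₁ q₂ → M₁.rules q₁ f = some r₁ → M₂.rules q₂ f = some r₂ →
      r₁.perm i = r₂.perm j → CoReach M₁ M₂ (r₁.st i) (r₂.st j)

/-- Two LTWs are same-ordered: co-reachable states either both lack a rule for `f`,
or have rules for `f` with the same permutation. -/
def SameOrdered {F Δ Q₁ Q₂ : Type} {ar : F → ℕ}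
    (M₁ : LTW F ar Δ Q₁) (M₂ : LTW F ar Δ Q₂) : Prop :=
  ∀ q₁ q₂, CoReach M₁ M₂ q₁ q₂ → ∀ f : F,
    (M₁.rules q₁ f = none ∧ M₂.rules q₂ f = none) ∨
    ∃ (r₁ : LTWRule Δ Q₁ (ar f)) (r₂ : LTWRule Δ Q₂ (ar f)),
      M₁.rules q₁ f = some r₁ ∧ M₂.rules q₂ f = some r₂ ∧ r₁.perm = r₂.perm

/-- `Accessible q p`: state `p` is accessible from state `q`. -/
inductive LTW.Accessible {F Δ Q : Type} {ar : F → ℕ} (M : LTW F ar Δ Q) : Q → Q → Prop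
  | refl (q : Q) : M.Accessible q q
  | step {q p : Q} {f : F} {r : LTWRule Δ Q (ar f)} (i : Fin (ar f)) :
      M.Accessible q p → M.rules p f = some r → M.Accessible q (r.st i)

/-- Partial normal form. -/
def LTW.PartialNormalForm {F Δ Q : Type} {ar : F → ℕ} (M : LTW F ar Δ Q) : Prop :=
  (∀ q : Q, QuasiPeriodic (M.lang q) → EarliestLang (M.lang q)) ∧
  M.EraseOrdered ∧
  ∀ (q : Q) (f : F) (r : LTWRule Δ Q (ar f)), M.rules q f = some r →
    ∀ (i : ℕ) (hi : i + 1 < ar f),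
      QuasiPeriodic (pairLang (M.lang (r.st ⟨i, Nat.lt_of_succ_lt hi⟩))
          (r.word (Fin.succ ⟨i, Nat.lt_of_succ_lt hi⟩)) (M.lang (r.st ⟨i + 1, hi⟩))) →
      EarliestLang (pairLang (M.lang (r.st ⟨i, Nat.lt_of_succ_lt hi⟩))
          (r.word (Fin.succ ⟨i, Nat.lt_of_succ_lt hi⟩)) (M.lang (r.st ⟨i + 1, hi⟩))) ∧
      r.perm ⟨i, Nat.lt_of_succ_lt hi⟩ < r.perm ⟨i + 1, hi⟩

theorem listPow_add' {Δ : Type} (w : List Δ) (m n : ℕ) :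
    listPow w (m + n) = listPow w m ++ listPow w n := by
  induction m with
  | zero => simp [listPow]
  | succ k ih => rw [Nat.succ_add]; simp [listPow, ih]

theorem foldr_swap_aux {Δ : Type} : ∀ (n : ℕ) (v ws ws' : Fin n → List Δ) (i : ℕ)
    (hi : i + 1 < n) (_ : v ⟨i, Nat.lt_of_succ_lt hi⟩ = [])
    (_ : ws' ⟨i, Nat.lt_of_succ_lt hi⟩ = ws ⟨i + 1, hi⟩)
    (_ : ws' ⟨i + 1, hi⟩ = ws ⟨i, Nat.lt_of_succ_lt hi⟩)
    (_ : ∀ k : Fin n, (k : ℕ) ≠ i → (k : ℕ) ≠ i + 1 → ws' k = ws k)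
    (_ : ws ⟨i, Nat.lt_of_succ_lt hi⟩ ++ ws ⟨i + 1, hi⟩
      = ws ⟨i + 1, hi⟩ ++ ws ⟨i, Nat.lt_of_succ_lt hi⟩),
    (List.finRange n).foldr (fun k acc => ws k ++ v k ++ acc) []
      = (List.finRange n).foldr (fun k acc => ws' k ++ v k ++ acc) [] := by
  intro n
  induction n with
  | zero => intro _ _ _ i hi; omega
  | succ n ih =>
    intro v ws ws' i hi hv h1 h2 h3 hc
    cases i with
    | succ i =>
      have := ih (fun k => v k.succ) (fun k => ws k.succ) (fun k => ws' k.succ) i (by omega)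
        hv h1 h2 (fun k ha hb => h3 k.succ (by simp; omega) (by simp; omega)) hc
      rw [List.finRange_succ]
      simp only [List.foldr_cons, List.foldr_map]
      rw [this, h3 0 (by simp) (by simp)]
    | zero =>
      obtain ⟨m, rfl⟩ : ∃ m, n = m + 1 := ⟨n - 1, by omega⟩
      rw [List.finRange_succ, List.finRange_succ]
      simp only [List.foldr_cons, List.foldr_map, List.map_cons]
      have e : (fun (k : Fin m) acc => ws' k.succ.succ ++ v k.succ.succ ++ acc)
          = (fun k acc => ws k.succ.succ ++ v k.succ.succ ++ acc) := by
        funext k acc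
        rw [h3 k.succ.succ (by simp) (by simp)]
      rw [e]
      have a1 : ws' 0 = ws (Fin.succ 0) := h1
      have a2 : ws' (Fin.succ 0) = ws 0 := h2
      have a3 : v 0 = [] := hv
      have a4 : ws 0 ++ ws (Fin.succ 0) = ws (Fin.succ 0) ++ ws 0 := hc
      rw [a1, a2, a3, List.append_nil, List.append_nil]
      simp only [← List.append_assoc]
      rw [a4]

theorem semState_swap
    {F Δ Q : Type} {ar : F → ℕ} [DecidableEq F] [DecidableEq Q]
    (M : LTW F ar Δ Q)
    (q₀ : Q) (f₀ : F) (r : LTWRule Δ Q (ar f₀)) (hr : M.rules q₀ f₀ = some r)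
    (i : Fin (ar f₀)) (hi : (i : ℕ) + 1 < ar f₀)
    (hu : r.word i.succ = [])
    (w : List Δ)
    (hp₁ : SubPow w (M.lang (r.st i)))
    (hp₂ : SubPow w (M.lang (r.st ⟨(i : ℕ) + 1, hi⟩)))
    (M' : LTW F ar Δ Q)
    (hM' : M'.rules = Function.update M.rules q₀
          (Function.update (M.rules q₀) f₀
            (some
              ⟨r.word,
               fun k => r.st (Equiv.swap i ⟨(i : ℕ) + 1, hi⟩ k),
               (Equiv.swap i ⟨(i : ℕ) + 1, hi⟩).trans r.perm⟩)))
    (t : RTree F ar) : ∀ q, M.semState t q = M'.semState t q := by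
  induction t with
  | node f ts ih =>
    intro q
    rw [LTW.semState, LTW.semState]
    simp only [← ih]
    by_cases hq : q = q₀ ∧ f = f₀
    · obtain ⟨rfl, rfl⟩ := hq
      have h' : M'.rules q f = some
              ⟨r.word,
               fun k => r.st (Equiv.swap i ⟨(i : ℕ) + 1, hi⟩ k),
               (Equiv.swap i ⟨(i : ℕ) + 1, hi⟩).trans r.perm⟩ := by
        rw [hM']; simp
      rw [h', hr]
      by_cases h : ∀ k : Fin (ar f), (M.semState (ts (r.perm k)) (r.st k)).isSome
      · have h2 : ∀ k : Fin (ar f), (M.semState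
            (ts (r.perm (Equiv.swap i ⟨(i : ℕ) + 1, hi⟩ k)))
            (r.st (Equiv.swap i ⟨(i : ℕ) + 1, hi⟩ k))).isSome := fun k => h _
        refine (dif_pos h).trans (Eq.trans ?_ (dif_pos h2).symm)
        congr 1
        unfold interleave
        congr 1
        have key : ∀ k l, k = l → (M.semState (ts (r.perm k)) (r.st k)).get (h k)
          = (M.semState (ts (r.perm l)) (r.st l)).get (h l) := by
          rintro k _ rfl; rfl
        refine foldr_swap_aux (ar f) (fun k => r.word k.succ) _ _ i hi hu ?_ ?_ ?_ ?_
        · exact key _ _ (Equiv.swap_apply_left _ _)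
        · exact key _ _ (Equiv.swap_apply_right _ _)
        · intro k ha hb
          exact key _ _ (Equiv.swap_apply_of_ne_of_ne (fun e => ha (by rw [e]))
            (fun e => hb (by rw [e])))
        · obtain ⟨a, ha⟩ := hp₁ ((M.semState (ts (r.perm i)) (r.st i)).get (h i))
            ⟨_, (Option.some_get _).symm⟩
          obtain ⟨b, hb⟩ := hp₂ _ ⟨ts (r.perm ⟨(i : ℕ) + 1, hi⟩),
            (Option.some_get (h ⟨(i : ℕ) + 1, hi⟩)).symm⟩
          simp only [Fin.eta]
          rw [ha, hb, ← listPow_add', ← listPow_add', Nat.add_comm]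
      · have h2 : ¬ ∀ k : Fin (ar f), (M.semState
            (ts (r.perm (Equiv.swap i ⟨(i : ℕ) + 1, hi⟩ k)))
            (r.st (Equiv.swap i ⟨(i : ℕ) + 1, hi⟩ k))).isSome := by
          intro h2
          apply h
          intro k
          have := h2 (Equiv.swap i ⟨(i : ℕ) + 1, hi⟩ k)
          rwa [Equiv.swap_apply_self] at this
        refine (dif_neg h).trans (Eq.trans ?_ (dif_neg h2).symm)
        rfl
    · have h' : M'.rules q f = M.rules q f := by
        rw [hM']
        by_cases hq1 : q = q₀
        · subst hq1
          have : f ≠ f₀ := fun e => hq ⟨rfl, e⟩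
          simp [Function.update_of_ne this]
        · rw [Function.update_of_ne hq1]
      rw [h']

/-- swapping two adjacent occurrences of states that are periodic of the
same period (with empty word between them) in a rule yields an equivalent LTW. -/
theorem swap_adjacent_periodic_states_equivalent
    {F Δ Q : Type} {ar : F → ℕ} [DecidableEq F] [DecidableEq Q] [Finite Q]
    (M : LTW F ar Δ Q) (hdom : M.NonemptyDoms)
    (q₀ : Q) (f₀ : F) (r : LTWRule Δ Q (ar f₀)) (hr : M.rules q₀ f₀ = some r)
    (i : Fin (ar f₀)) (hi : (i : ℕ) + 1 < ar f₀)
    (hu : r.word i.succ = [])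
    (w : List Δ)
    (hp₁ : PeriodicOf (M.lang (r.st i)) w)
    (hp₂ : PeriodicOf (M.lang (r.st ⟨(i : ℕ) + 1, hi⟩)) w) :
    M.sem =
      (LTW.mk M.pre M.init M.post
        (Function.update M.rules q₀
          (Function.update (M.rules q₀) f₀
            (some
              ⟨r.word,
               fun k => r.st (Equiv.swap i ⟨(i : ℕ) + 1, hi⟩ k),
               (Equiv.swap i ⟨(i : ℕ) + 1, hi⟩).trans r.perm⟩)))).sem := by
  funext t
  unfold LTW.sem
  exact congrArg (Option.map _)
    (semState_swap M q₀ f₀ r hr i hi hu w hp₁.1 hp₂.1 (LTW.mk M.pre M.init M.post _) rfl t M.init)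

end LTWpaper
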